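/- Let 𝕏_i = (X_i, d_{X_i}, ξ_i), i = 1, 2, be mm-spaces and let (Z, d_Z) be a compact metric space. Let (λ_n)_{n ∈ ℕ} be a sequence with λ_n → ∞ and for each n let π_n be a minimizer of EW_{λ_n}(𝕏₁, 𝕏₂). Then (π_n) converges weakly, up to a subsequence, to some π ∈ Π(ζ₁, ζ₂), where for each i the measure ζ_i ∈ 𝒫(Z) is a GW approximation of 𝕏_i on (Z, d_Z), i.e., a minimizer of ζ ↦ GW²(𝕏_i, (Z, d_Z, ζ)) over ζ ∈ 𝒫(Z). -/

import Mathlib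

/-!
On a compact metric space `Z` the space of Borel probability measures with the weak topology is
compact and metrizable, so the plans `π n` have a weak cluster point `πl`; its marginals are the
candidates `ζ₁`, `ζ₂`.

The map `ζ ↦ GWsq ξ ζ` is lower semicontinuous (`lowerSemicontinuous_GWsq`). Indeed the objective
`GWobj` is weakly continuous in the plan, so the infimum over the compact set of couplings is
attained (`exists_GWobj_eq_GWsq`), and hence each sublevel set of `GWsq ξ` is the image, under the
second-marginal map, of a compact set of plans.

Testing the minimality of `π n` against a product `ζ₁' ⊗ ζ₂'` and dividing by `lam n` bounds the sum
of the two `GWsq` terms at `π n` by `GWsq ξ₁ ζ₁' + GWsq ξ₂ ζ₂' + C / lam n`, where `C` is the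
transport cost of the product. Lower semicontinuity yields
`GWsq ξ₁ ζ₁ + GWsq ξ₂ ζ₂ ≤ GWsq ξ₁ ζ₁' + GWsq ξ₂ ζ₂'` in the limit, and the choices `ζ₂' = ζ₂` and
`ζ₁' = ζ₁` separate the two minimization problems.
-/

open MeasureTheory Filter Topology

noncomputable section

/-- The set of couplings (transport plans) between two measures. -/
def couplings {X Y : Type*} [MeasurableSpace X] [MeasurableSpace Y]
    (μ : Measure X) (ν : Measure Y) : Set (Measure (X × Y)) :=
  {π | π.map Prod.fst = μ ∧ π.map Prod.snd = ν}

/-- Squared Wasserstein-2 distance. -/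
noncomputable def W2sq {Z : Type*} [MetricSpace Z] [MeasurableSpace Z]
    (μ ν : Measure Z) : ℝ :=
  ⨅ π : couplings μ ν, ∫ p : Z × Z, dist p.1 p.2 ^ 2 ∂(π.1)

/-- Wasserstein-2 distance. -/
noncomputable def W2 {Z : Type*} [MetricSpace Z] [MeasurableSpace Z]
    (μ ν : Measure Z) : ℝ := Real.sqrt (W2sq μ ν)

/-- The Gromov--Wasserstein objective of a plan `γ`. -/
noncomputable def GWobj {X Y : Type*} [MetricSpace X] [MetricSpace Y]
    [MeasurableSpace X] [MeasurableSpace Y]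
    (γ : Measure (X × Y)) : ℝ :=
  ∫ q : (X × Y) × (X × Y),
    (dist q.1.1 q.2.1 - dist q.1.2 q.2.2) ^ 2 ∂(γ.prod γ)

/-- Squared Gromov--Wasserstein distance between `(X, d_X, ξ)` and `(Y, d_Y, ν)`. -/
noncomputable def GWsq {X Y : Type*} [MetricSpace X] [MetricSpace Y]
    [MeasurableSpace X] [MeasurableSpace Y]
    (ξ : Measure X) (ν : Measure Y) : ℝ :=
  ⨅ γ : couplings ξ ν, GWobj γ.1

/-- The support of a measure: points all of whose open neighborhoods have positive measure. -/
def msupport {X : Type*} [TopologicalSpace X] [MeasurableSpace X] (ξ : Measure X) : Set X :=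
  {x | ∀ U : Set X, IsOpen U → x ∈ U → 0 < ξ U}

/-- Pushforward `I,#ξ` of `ξ` under a map defined on the support of `ξ`. -/
noncomputable def pushSupp {X Z : Type*} [MetricSpace X] [MetricSpace Z]
    [MeasurableSpace X] [MeasurableSpace Z]
    (ξ : Measure X) (I : msupport ξ → Z) : Measure Z :=
  Measure.map I (Measure.comap Subtype.val ξ)

/-- The objective of the `EW_λ` problem evaluated at a plan `π` on `Z × Z`. -/
noncomputable def EWobj {X₁ X₂ Z : Type*} [MetricSpace X₁] [MetricSpace X₂] [MetricSpace Z]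
    [MeasurableSpace X₁] [MeasurableSpace X₂] [MeasurableSpace Z]
    (lam : ℝ) (ξ₁ : Measure X₁) (ξ₂ : Measure X₂) (π : Measure (Z × Z)) : ℝ :=
  (∫ p : Z × Z, dist p.1 p.2 ^ 2 ∂π)
    + lam * (GWsq ξ₁ (π.map Prod.fst) + GWsq ξ₂ (π.map Prod.snd))

/-- `EW_λ(𝕏₁, 𝕏₂)²`: infimum of the `EW_λ` objective over probability measures on `Z × Z`. -/
noncomputable def EWlamSq {X₁ X₂ : Type*} (Z : Type*) [MetricSpace X₁] [MetricSpace X₂] [MetricSpace Z]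
    [MeasurableSpace X₁] [MeasurableSpace X₂] [MeasurableSpace Z]
    (lam : ℝ) (ξ₁ : Measure X₁) (ξ₂ : Measure X₂) : ℝ :=
  ⨅ π : {π : Measure (Z × Z) // IsProbabilityMeasure π}, EWobj lam ξ₁ ξ₂ π.1

/-- `EW(𝕏₁, 𝕏₂)²`: infimum over isometric embeddings of the supports into `Z`. -/
noncomputable def EWsq {X₁ X₂ : Type*} (Z : Type*) [MetricSpace X₁] [MetricSpace X₂] [MetricSpace Z]
    [MeasurableSpace X₁] [MeasurableSpace X₂] [MeasurableSpace Z]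
    (ξ₁ : Measure X₁) (ξ₂ : Measure X₂) : ℝ :=
  ⨅ (I₁ : {f : msupport ξ₁ → Z // Isometry f}) (I₂ : {f : msupport ξ₂ → Z // Isometry f}),
    W2sq (pushSupp ξ₁ I₁.1) (pushSupp ξ₂ I₂.1)

/-- Weak convergence of a sequence of measures. -/
def WeakConv {Z : Type*} [TopologicalSpace Z] [MeasurableSpace Z]
    (μs : ℕ → Measure Z) (μ : Measure Z) : Prop :=
  ∀ φ : Z → ℝ, Continuous φ →
    Tendsto (fun n => ∫ z, φ z ∂(μs n)) atTop (nhds (∫ z, φ z ∂μ))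

/-- On a compact space every continuous function is an admissible test function for the weak
topology on probability measures. -/
lemma continuous_integral_of_compact {Y : Type*} [TopologicalSpace Y] [CompactSpace Y]
    [MeasurableSpace Y] [OpensMeasurableSpace Y] {f : Y → ℝ} (hf : Continuous f) :
    Continuous fun μ : ProbabilityMeasure Y => ∫ y, f y ∂(μ : Measure Y) :=
  ProbabilityMeasure.continuous_integral_boundedContinuousFunction
    (BoundedContinuousFunction.mkOfCompact ⟨f, hf⟩)

lemma isProbabilityMeasure_of_mem_couplings {X Z : Type*} [MeasurableSpace X]
    [MeasurableSpace Z] {ξ : Measure X} [IsProbabilityMeasure ξ]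
    {ν : Measure Z} {γ : Measure (X × Z)} (hγ : γ ∈ couplings ξ ν) : IsProbabilityMeasure γ := by
  have h : IsProbabilityMeasure (γ.map Prod.fst) := by rw [hγ.1]; infer_instance
  exact (Measure.isProbabilityMeasure_map_iff measurable_fst.aemeasurable).1 h

section GWbasic

variable {X Z : Type*} [MetricSpace X] [MetricSpace Z] [MeasurableSpace X] [MeasurableSpace Z]

lemma GWobj_nonneg (γ : Measure (X × Z)) : 0 ≤ GWobj γ :=
  integral_nonneg fun _ => sq_nonneg _

lemma GWsq_nonneg (ξ : Measure X) (ν : Measure Z) : 0 ≤ GWsq ξ ν :=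
  Real.iInf_nonneg fun _ => GWobj_nonneg _

lemma GWsq_le {ξ : Measure X} {ν : Measure Z} {γ : Measure (X × Z)} (hγ : γ ∈ couplings ξ ν) :
    GWsq ξ ν ≤ GWobj γ :=
  ciInf_le (f := fun γ : couplings ξ ν => GWobj γ.1)
    ⟨0, by rintro _ ⟨γ, rfl⟩; exact GWobj_nonneg _⟩ ⟨γ, hγ⟩

end GWbasic

section GW

variable {X Z : Type*} [MetricSpace X] [CompactSpace X] [MetricSpace Z] [CompactSpace Z]
  [MeasurableSpace X] [BorelSpace X] [MeasurableSpace Z] [BorelSpace Z]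

lemma continuous_GWobj :
    Continuous fun γ : ProbabilityMeasure (X × Z) => GWobj (γ : Measure (X × Z)) := by
  have hf : Continuous fun q : (X × Z) × (X × Z) =>
      (dist q.1.1 q.2.1 - dist q.1.2 q.2.2) ^ 2 := by fun_prop
  exact (continuous_integral_of_compact hf).comp
    (ProbabilityMeasure.continuous_prod.comp (continuous_id.prodMk continuous_id))

/-- The Gromov–Wasserstein infimum is attained, because the set of couplings is weakly compact and
the objective is weakly continuous. -/
lemma exists_GWobj_eq_GWsq (ξ : Measure X) [IsProbabilityMeasure ξ]
    (ν : Measure Z) [IsProbabilityMeasure ν] :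
    ∃ γ : ProbabilityMeasure (X × Z),
      (γ : Measure (X × Z)) ∈ couplings ξ ν ∧ GWobj (γ : Measure (X × Z)) = GWsq ξ ν := by
  let K : Set (ProbabilityMeasure (X × Z)) :=
    {γ | γ.map measurable_fst.aemeasurable = ⟨ξ, inferInstance⟩ ∧
      γ.map measurable_snd.aemeasurable = ⟨ν, inferInstance⟩}
  have hKc : IsCompact K :=
    ((isClosed_eq (ProbabilityMeasure.continuous_map continuous_fst) continuous_const).inter
      (isClosed_eq (ProbabilityMeasure.continuous_map continuous_snd)
        continuous_const)).isCompact
  have hK : ∀ γ : ProbabilityMeasure (X × Z),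
      γ ∈ K ↔ (γ : Measure (X × Z)) ∈ couplings ξ ν := fun γ =>
    and_congr Subtype.ext_iff Subtype.ext_iff
  have hprod : (⟨ξ.prod ν, inferInstance⟩ : ProbabilityMeasure (X × Z)) ∈ K :=
    (hK _).2 ⟨by simp, by simp⟩
  obtain ⟨γ, hγ, hmin⟩ := hKc.exists_isMinOn ⟨_, hprod⟩ continuous_GWobj.continuousOn
  refine ⟨γ, (hK γ).1 hγ, le_antisymm ?_ (GWsq_le ((hK γ).1 hγ))⟩
  have : Nonempty (couplings ξ ν) := ⟨⟨_, (hK γ).1 hγ⟩⟩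
  refine le_ciInf fun δ => ?_
  have hp := isProbabilityMeasure_of_mem_couplings δ.2
  exact hmin (show (⟨δ.1, hp⟩ : ProbabilityMeasure (X × Z)) ∈ K from (hK _).2 δ.2)

/-- The sublevel sets are closed: since the infimum is attained, each is the second-marginal image
of a weakly compact set of plans. -/
lemma lowerSemicontinuous_GWsq (ξ : Measure X) [IsProbabilityMeasure ξ] :
    LowerSemicontinuous fun ν : ProbabilityMeasure Z => GWsq ξ (ν : Measure Z) := by
  rw [lowerSemicontinuous_iff_isClosed_preimage]
  intro c
  let K : Set (ProbabilityMeasure (X × Z)) :=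
    {γ | γ.map measurable_fst.aemeasurable = ⟨ξ, inferInstance⟩ ∧
      GWobj (γ : Measure (X × Z)) ≤ c}
  have hKc : IsCompact K :=
    ((isClosed_eq (ProbabilityMeasure.continuous_map continuous_fst) continuous_const).inter
      (isClosed_le continuous_GWobj continuous_const)).isCompact
  have hsnd : Continuous fun γ : ProbabilityMeasure (X × Z) =>
      γ.map measurable_snd.aemeasurable := ProbabilityMeasure.continuous_map continuous_snd
  convert (hKc.image hsnd).isClosed using 1
  ext ν
  constructor
  · intro hν
    obtain ⟨γ, hγ, hγ'⟩ := exists_GWobj_eq_GWsq ξ (ν : Measure Z)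
    exact ⟨γ, ⟨Subtype.ext hγ.1, hγ'.le.trans hν⟩, Subtype.ext hγ.2⟩
  · rintro ⟨γ, ⟨h₁, h₂⟩, rfl⟩
    exact (GWsq_le ⟨congrArg Subtype.val h₁, rfl⟩).trans h₂

end GW

theorem stmt12
    {X₁ X₂ Z : Type*} [MetricSpace X₁] [CompactSpace X₁] [MetricSpace X₂] [CompactSpace X₂]
    [MetricSpace Z] [CompactSpace Z]
    [MeasurableSpace X₁] [BorelSpace X₁] [MeasurableSpace X₂] [BorelSpace X₂]
    [MeasurableSpace Z] [BorelSpace Z]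
    (ξ₁ : Measure X₁) (ξ₂ : Measure X₂) [IsProbabilityMeasure ξ₁] [IsProbabilityMeasure ξ₂]
    (lam : ℕ → ℝ) (hpos : ∀ n, 0 < lam n) (hlam : Tendsto lam atTop atTop)
    (π : ℕ → Measure (Z × Z)) (hprob : ∀ n, IsProbabilityMeasure (π n))
    (hmin : ∀ n, EWobj (lam n) ξ₁ ξ₂ (π n) = EWlamSq Z (lam n) ξ₁ ξ₂) :
    ∃ φ : ℕ → ℕ, StrictMono φ ∧
      ∃ (πl : Measure (Z × Z)) (ζ₁ ζ₂ : Measure Z),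
        IsProbabilityMeasure ζ₁ ∧ IsProbabilityMeasure ζ₂ ∧
        WeakConv (fun n => π (φ n)) πl ∧
        πl ∈ couplings ζ₁ ζ₂ ∧
        (∀ ζ : Measure Z, IsProbabilityMeasure ζ → GWsq ξ₁ ζ₁ ≤ GWsq ξ₁ ζ) ∧
        (∀ ζ : Measure Z, IsProbabilityMeasure ζ → GWsq ξ₂ ζ₂ ≤ GWsq ξ₂ ζ) := by
  let P : ℕ → ProbabilityMeasure (Z × Z) := fun n => ⟨π n, hprob n⟩
  obtain ⟨πl, φ, hφ, hconv⟩ := CompactSpace.tendsto_subseq P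
  let ζ₁ : ProbabilityMeasure Z := πl.map measurable_fst.aemeasurable
  let ζ₂ : ProbabilityMeasure Z := πl.map measurable_snd.aemeasurable
  let F : ProbabilityMeasure (Z × Z) → ℝ := fun p =>
    GWsq ξ₁ ((p : Measure (Z × Z)).map Prod.fst) + GWsq ξ₂ ((p : Measure (Z × Z)).map Prod.snd)
  have hF : LowerSemicontinuous F :=
    ((lowerSemicontinuous_GWsq ξ₁).comp
      (ProbabilityMeasure.continuous_map (Ω := Z × Z) continuous_fst)).add
    ((lowerSemicontinuous_GWsq ξ₂).comp
      (ProbabilityMeasure.continuous_map (Ω := Z × Z) continuous_snd))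
  have key : ∀ (η₁ η₂ : Measure Z) [IsProbabilityMeasure η₁] [IsProbabilityMeasure η₂],
      F πl ≤ GWsq ξ₁ η₁ + GWsq ξ₂ η₂ := by
    intro η₁ η₂ _ _
    set S := GWsq ξ₁ η₁ + GWsq ξ₂ η₂ with hS
    set C := ∫ p : Z × Z, dist p.1 p.2 ^ 2 ∂(η₁.prod η₂) with hC
    have hbound : ∀ n, F (P n) ≤ S + C / lam n := by
      intro n
      have hle : EWobj (lam n) ξ₁ ξ₂ (π n) ≤ EWobj (lam n) ξ₁ ξ₂ (η₁.prod η₂) := by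
        rw [hmin n]
        refine ciInf_le (f := fun p : {p : Measure (Z × Z) // IsProbabilityMeasure p} =>
          EWobj (lam n) ξ₁ ξ₂ p.1) ⟨0, ?_⟩ ⟨η₁.prod η₂, inferInstance⟩
        rintro _ ⟨p, rfl⟩
        exact add_nonneg (integral_nonneg fun _ => sq_nonneg _)
          (mul_nonneg (hpos n).le (add_nonneg (GWsq_nonneg _ _) (GWsq_nonneg _ _)))
      have hle' : lam n * F (P n) ≤ C + lam n * S := by
        have h0 : 0 ≤ ∫ p : Z × Z, dist p.1 p.2 ^ 2 ∂(π n) :=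
          integral_nonneg fun _ => sq_nonneg _
        have h1 : EWobj (lam n) ξ₁ ξ₂ (η₁.prod η₂) = C + lam n * S := by
          simp [EWobj, hS, hC]
        have h2 : EWobj (lam n) ξ₁ ξ₂ (π n)
          = (∫ p : Z × Z, dist p.1 p.2 ^ 2 ∂(π n)) + lam n * F (P n) := rfl
        linarith
      have hn := hpos n
      have h3 : S + C / lam n = (C + lam n * S) / lam n := by
        field_simp
        ring
      rw [h3, le_div_iff₀ hn]
      linarith
    have hlim : Tendsto (fun n => S + C / lam (φ n)) atTop (𝓝 S) := by
      simpa using tendsto_const_nhds.add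
        ((hlam.comp hφ.tendsto_atTop).const_div_atTop C)
    refine le_of_forall_lt fun c hc => ?_
    by_contra! hSc
    -- `F` stays above a level strictly between `S` and `F πl`, which the upper bound contradicts.
    obtain ⟨d, hcd, hd⟩ := exists_between hc
    have e₁ := hconv.eventually (hF πl d hd)
    have e₂ := hlim.eventually (gt_mem_nhds (hSc.trans_lt hcd))
    obtain ⟨n, h₁, h₂⟩ := (e₁.and e₂).exists
    exact absurd (hbound (φ n)) (not_le.2 (h₂.trans h₁))
  refine ⟨φ, hφ, πl, ζ₁, ζ₂, inferInstance, inferInstance, ?_, ⟨rfl, rfl⟩, ?_, ?_⟩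
  · intro f hf
    exact ((continuous_integral_of_compact hf).tendsto πl).comp hconv
  · intro ζ hζ
    exact le_of_add_le_add_right (key ζ ζ₂)
  · intro ζ hζ
    exact le_of_add_le_add_left (key ζ₁ ζ)
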